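/- Let X ∈ M(ℂ^n) be Hermitian with eigendecomposition X = ∑_i ξ_i |x_i⟩⟨x_i| (orthonormal eigenvectors), and let x₀ ∈ ℝ satisfy ∑_i max(ξ_i − x₀, 0) = 1. Then X' = ∑_i max(ξ_i − x₀, 0) |x_i⟩⟨x_i| is a minimizer of ‖X − X''‖₂ over all positive semidefinite trace-one matrices X'' ∈ M(ℂ^n); i.e., the water-filling construction gives the Frobenius-norm projection onto the set of density matrices. -/

import Mathlib

noncomputable section
open Matrix Kronecker BigOperators
open scoped ComplexOrder

/-- The Frobenius (Hilbert–Schmidt) norm `‖A‖₂ = √Tr(AᴴA)` of a complex matrix. -/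
def frobNorm {n : Type*} [Fintype n] (A : Matrix n n ℂ) : ℝ :=
  Real.sqrt (Matrix.trace (Aᴴ * A)).re

/-- The operator norm `‖A‖_∞` (largest singular value) of a complex matrix. -/
def opNorm {n : Type*} [Fintype n] [DecidableEq n] (A : Matrix n n ℂ) : ℝ :=
  ‖Matrix.toEuclideanCLM (𝕜 := ℂ) A‖

/-- The trace norm `‖A‖₁ = Tr √(AᴴA)` of a complex matrix. -/
def traceNorm {n : Type*} [Fintype n] [DecidableEq n] (A : Matrix n n ℂ) : ℝ :=
  open scoped MatrixOrder in (CFC.sqrt (Aᴴ * A)).trace.re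

/-- A density matrix: positive semidefinite with trace one. -/
def IsDensity {n : Type*} [Fintype n] (ρ : Matrix n n ℂ) : Prop :=
  ρ.PosSemidef ∧ ρ.trace = 1

/-- A density matrix `ρ` is `δ`-almost rank `r` if there is a density matrix of rank at most `r`
within operator-norm distance `δ` of it. -/
def AlmostRank {n : Type*} [Fintype n] [DecidableEq n] (r : ℕ) (δ : ℝ) (ρ : Matrix n n ℂ) : Prop :=
  ∃ σ : Matrix n n ℂ, IsDensity σ ∧ σ.rank ≤ r ∧ opNorm (ρ - σ) ≤ δ

/-- The rank-one (outer-product) matrix `|v⟩⟨v|`. -/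
def outer {n : Type*} (v : EuclideanSpace ℂ n) : Matrix n n ℂ :=
  Matrix.of fun i j => v i * (starRingEnd ℂ) (v j)

/-- Partial trace over the first tensor factor. -/
def ptrace1 {d : ℕ} (X : Matrix (Fin d × Fin d) (Fin d × Fin d) ℂ) : Matrix (Fin d) (Fin d) ℂ :=
  Matrix.of fun j j' => ∑ i, X (i, j) (i, j')

/-- Partial trace over the second tensor factor. -/
def ptrace2 {d : ℕ} (X : Matrix (Fin d × Fin d) (Fin d × Fin d) ℂ) : Matrix (Fin d) (Fin d) ℂ :=
  Matrix.of fun i i' => ∑ j, X (i, j) (i', j)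

/-- A family of `m` rank-one projectors, each given by a unit vector. -/
def IsRankOneProjFamily {d m : ℕ} (P : Fin m → Matrix (Fin d) (Fin d) ℂ) : Prop :=
  ∀ l, ∃ v : EuclideanSpace ℂ (Fin d), ‖v‖ = 1 ∧ P l = outer v

/-- Near-isotropy: `∑ l, Tr(P l · A) • P l = A + Tr(A) • 𝟙` for every `A`. -/
def NearIsotropic {d m : ℕ} (P : Fin m → Matrix (Fin d) (Fin d) ℂ) : Prop :=
  ∀ A : Matrix (Fin d) (Fin d) ℂ,
    ∑ l, Matrix.trace (P l * A) • P l = A + Matrix.trace A • (1 : Matrix (Fin d) (Fin d) ℂ)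

/-!
Put `X' = ∑ pᵢ |xᵢ⟩⟨xᵢ|` with `pᵢ = max (ξᵢ - x₀) 0`. By the obtuse-angle criterion for projections,
it suffices that `Re Tr ((X - X')ᴴ (X' - Y)) ≥ 0` for every competitor `Y`. As `X - X'` is diagonal
in the eigenbasis, this trace only sees the diagonal entries `yᵢ = ⟨xᵢ|Y|xᵢ⟩` of `Y`: it equals
`∑ (ξᵢ - pᵢ) (pᵢ - yᵢ)`. So the problem reduces to projecting the vector `ξ` onto a simplex, where
`ξᵢ - pᵢ = min ξᵢ x₀` is at most `x₀`, with equality on the support of `p`.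
-/

/- The sum equals `∑ (x₀ - min ξᵢ x₀) yᵢ`: since `∑ p = ∑ y`, the coefficients `ξᵢ - pᵢ` may be
shifted by `x₀`, and the shifted ones vanish wherever `pᵢ ≠ 0`. -/
lemma sum_sub_max_mul_max_sub_nonneg {ι R : Type*} [CommRing R] [LinearOrder R]
    [IsStrictOrderedRing R] {s : Finset ι} {ξ y : ι → R} {x₀ : R} (hy : ∀ i ∈ s, 0 ≤ y i)
    (hsum : ∑ i ∈ s, y i = ∑ i ∈ s, max (ξ i - x₀) 0) :
    0 ≤ ∑ i ∈ s, (ξ i - max (ξ i - x₀) 0) * (max (ξ i - x₀) 0 - y i) := by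
  have shift (i : ι) : (ξ i - max (ξ i - x₀) 0) * (max (ξ i - x₀) 0 - y i) =
      x₀ * (max (ξ i - x₀) 0 - y i) + (max (ξ i - x₀) 0 - (ξ i - x₀)) * y i := by
    have complementary : (ξ i - x₀ - max (ξ i - x₀) 0) * max (ξ i - x₀) 0 = 0 := by
      rcases max_choice (ξ i - x₀) 0 with h | h <;> simp [h]
    linear_combination complementary
  calc 0 ≤ ∑ i ∈ s, (max (ξ i - x₀) 0 - (ξ i - x₀)) * y i :=
        Finset.sum_nonneg fun i hi => mul_nonneg (sub_nonneg.2 (le_max_left _ _)) (hy i hi)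
    _ = ∑ i ∈ s, (ξ i - max (ξ i - x₀) 0) * (max (ξ i - x₀) 0 - y i) := by
        simp only [shift, Finset.sum_add_distrib, ← Finset.mul_sum, Finset.sum_sub_distrib, hsum,
          sub_self, mul_zero, zero_add]

section Frobenius

variable {n : Type*} [Fintype n]

lemma frobNorm_sq (A : Matrix n n ℂ) : frobNorm A ^ 2 = (Aᴴ * A).trace.re :=
  Real.sq_sqrt (Complex.nonneg_iff.1 (posSemidef_conjTranspose_mul_self A).trace_nonneg).1

lemma frobNorm_add_sq (A B : Matrix n n ℂ) :
    frobNorm (A + B) ^ 2 = frobNorm A ^ 2 + 2 * (Aᴴ * B).trace.re + frobNorm B ^ 2 := by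
  have cross : (Bᴴ * A).trace.re = (Aᴴ * B).trace.re := by
    rw [← conjTranspose_conjTranspose A, ← conjTranspose_mul, trace_conjTranspose,
      conjTranspose_conjTranspose, Complex.star_def, Complex.conj_re]
  simp only [frobNorm_sq, conjTranspose_add, add_mul, mul_add, trace_add, Complex.add_re, cross]
  ring

lemma frobNorm_sub_le_of_trace_nonneg {X P Y : Matrix n n ℂ}
    (h : 0 ≤ ((X - P)ᴴ * (P - Y)).trace.re) : frobNorm (X - P) ≤ frobNorm (X - Y) := by
  refine le_of_sq_le_sq ?_ (Real.sqrt_nonneg _)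
  rw [← sub_add_sub_cancel X P Y, frobNorm_add_sq]
  linarith [sq_nonneg (frobNorm (P - Y))]

end Frobenius

section Outer

variable {n ι : Type*}

lemma outer_eq_vecMulVec (v : EuclideanSpace ℂ n) : outer v = vecMulVec v (star v) := rfl

lemma isHermitian_outer (v : EuclideanSpace ℂ n) : (outer v).IsHermitian := by
  rw [outer_eq_vecMulVec, IsHermitian, conjTranspose_vecMulVec, star_star]

lemma isHermitian_sum_smul_outer [Fintype ι] (v : ι → EuclideanSpace ℂ n) (c : ι → ℝ) :
    (∑ i, (c i : ℂ) • outer (v i)).IsHermitian := by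
  simp [IsHermitian, conjTranspose_sum, (isHermitian_outer _).eq]

lemma posSemidef_outer [Finite n] (v : EuclideanSpace ℂ n) : (outer v).PosSemidef :=
  posSemidef_vecMulVec_self_star _

lemma posSemidef_sum_smul_outer [Finite n] [Fintype ι] (v : ι → EuclideanSpace ℂ n) {c : ι → ℝ}
    (hc : ∀ i, 0 ≤ c i) : (∑ i, (c i : ℂ) • outer (v i)).PosSemidef :=
  posSemidef_sum _ fun i _ => (posSemidef_outer (v i)).smul (Complex.zero_le_real.2 (hc i))

variable [Fintype n]

lemma trace_outer_mul (v : EuclideanSpace ℂ n) (A : Matrix n n ℂ) :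
    (outer v * A).trace = star ⇑v ⬝ᵥ A *ᵥ v := by
  rw [outer_eq_vecMulVec, vecMulVec_mul, trace_vecMulVec, dotProduct_comm, dotProduct_mulVec]

lemma trace_outer_mul_outer (u v : EuclideanSpace ℂ n) :
    (outer u * outer v).trace = inner ℂ u v * inner ℂ v u := by
  rw [trace_outer_mul, outer_eq_vecMulVec, vecMulVec_mulVec, dotProduct_smul,
    op_smul_eq_mul, dotProduct_comm, dotProduct_comm (star v.ofLp),
    EuclideanSpace.inner_eq_star_dotProduct, EuclideanSpace.inner_eq_star_dotProduct]

lemma trace_outer (v : EuclideanSpace ℂ n) : (outer v).trace = inner ℂ v v := by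
  rw [outer_eq_vecMulVec, trace_vecMulVec, EuclideanSpace.inner_eq_star_dotProduct]

lemma re_trace_outer_mul_nonneg (v : EuclideanSpace ℂ n) {A : Matrix n n ℂ} (hA : A.PosSemidef) :
    0 ≤ (outer v * A).trace.re := by
  rw [trace_outer_mul]
  exact hA.re_dotProduct_nonneg _

variable [Fintype ι]

lemma trace_sum_smul_outer_mul (v : ι → EuclideanSpace ℂ n) (c : ι → ℂ) (A : Matrix n n ℂ) :
    ((∑ i, c i • outer (v i)) * A).trace = ∑ i, c i * (outer (v i) * A).trace := by
  simp [Finset.sum_mul, trace_sum]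

lemma trace_sum_smul_outer {v : ι → EuclideanSpace ℂ n} (hv : Orthonormal ℂ v) (c : ι → ℂ) :
    (∑ i, c i • outer (v i)).trace = ∑ i, c i := by
  simp [trace_sum, trace_outer, inner_self_eq_norm_sq_to_K, hv.1]

lemma trace_outer_mul_sum_smul_outer {v : ι → EuclideanSpace ℂ n} (hv : Orthonormal ℂ v)
    (c : ι → ℂ) (j : ι) : (outer (v j) * ∑ i, c i • outer (v i)).trace = c j := by
  classical
  simp [Finset.mul_sum, trace_sum, trace_outer_mul_outer, orthonormal_iff_ite.1 hv]

lemma sum_outer_orthonormalBasis [DecidableEq n]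
    (b : OrthonormalBasis ι ℂ (EuclideanSpace ℂ n)) : ∑ i, outer (b i) = 1 := by
  ext j k
  have h := b.sum_inner_mul_inner (EuclideanSpace.single j 1) (EuclideanSpace.single k 1)
  simpa [outer, Matrix.sum_apply, Matrix.one_apply, eq_comm, EuclideanSpace.inner_single_left,
    EuclideanSpace.inner_single_right] using h

lemma sum_trace_outer_mul_orthonormalBasis (b : OrthonormalBasis ι ℂ (EuclideanSpace ℂ n))
    (A : Matrix n n ℂ) : ∑ i, (outer (b i) * A).trace = A.trace := by
  classical
  rw [← trace_sum, ← Finset.sum_mul, sum_outer_orthonormalBasis, one_mul]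

end Outer

lemma exists_orthonormalBasis_coe_eq {𝕜 E ι : Type*} [RCLike 𝕜] [NormedAddCommGroup E]
    [InnerProductSpace 𝕜 E] [FiniteDimensional 𝕜 E] [Fintype ι] {v : ι → E} (hv : Orthonormal 𝕜 v)
    (hcard : Module.finrank 𝕜 E = Fintype.card ι) : ∃ b : OrthonormalBasis ι 𝕜 E, ⇑b = v := by
  have hv' : Orthonormal 𝕜 (Set.univ.domRestrict v) := hv.comp _ Subtype.val_injective
  obtain ⟨b, hb⟩ := hv'.exists_orthonormalBasis_extension_of_card_eq hcard
  exact ⟨b, funext fun i => hb i trivial⟩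

theorem cp1_projection_minimizer_general {n ι : Type*} [Fintype n] [Fintype ι]
    (b : OrthonormalBasis ι ℂ (EuclideanSpace ℂ n)) {X : Matrix n n ℂ} {ξ : ι → ℝ}
    (hX : X = ∑ i, (ξ i : ℂ) • outer (b i)) {x₀ τ : ℝ} (hx₀ : ∑ i, max (ξ i - x₀) 0 = τ) :
    (∑ i, (↑(max (ξ i - x₀) 0) : ℂ) • outer (b i)).PosSemidef ∧
    (∑ i, (↑(max (ξ i - x₀) 0) : ℂ) • outer (b i)).trace = τ ∧
    ∀ Y : Matrix n n ℂ, Y.PosSemidef → Y.trace = τ →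
      frobNorm (X - ∑ i, (↑(max (ξ i - x₀) 0) : ℂ) • outer (b i)) ≤ frobNorm (X - Y) := by
  refine ⟨posSemidef_sum_smul_outer b fun i => le_max_right _ _, ?_, fun Y hY hYτ => ?_⟩
  · rw [trace_sum_smul_outer b.orthonormal, ← hx₀, Complex.ofReal_sum]
  set p : ι → ℝ := fun i => max (ξ i - x₀) 0
  set y : ι → ℝ := fun i => (outer (b i) * Y).trace.re
  have hy_sum : ∑ i, y i = ∑ i, p i := by
    rw [hx₀, ← Complex.re_sum, sum_trace_outer_mul_orthonormalBasis, hYτ, Complex.ofReal_re]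
  set P : Matrix n n ℂ := ∑ i, (p i : ℂ) • outer (b i) with hP
  have hX_sub : X - P = ∑ i, ((ξ i - p i : ℝ) : ℂ) • outer (b i) := by
    simp only [hX, hP, Complex.ofReal_sub, sub_smul, Finset.sum_sub_distrib]
  apply frobNorm_sub_le_of_trace_nonneg
  calc 0 ≤ ∑ i, (ξ i - p i) * (p i - y i) :=
        sum_sub_max_mul_max_sub_nonneg (fun i _ => re_trace_outer_mul_nonneg (b i) hY) hy_sum
    _ = ((X - P)ᴴ * (P - Y)).trace.re := by
        rw [hX_sub, hP, (isHermitian_sum_smul_outer b _).eq, trace_sum_smul_outer_mul]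
        simp only [mul_sub, trace_sub, trace_outer_mul_sum_smul_outer b.orthonormal,
          Complex.re_sum, Complex.sub_re, Complex.re_ofReal_mul, Complex.ofReal_re, y, p]

/-- closed-form CP1 projection: for a Hermitian matrix
`X = ∑ ξᵢ |xᵢ⟩⟨xᵢ|` with orthonormal eigenvectors and a water-filling level `x₀` with
`∑ max(ξᵢ − x₀, 0) = 1`, the matrix `X' = ∑ max(ξᵢ − x₀, 0) |xᵢ⟩⟨xᵢ|` is a density matrix and a
minimizer of `‖X − X''‖₂` over all positive semidefinite trace-one matrices `X''`. -/
theorem cp1_projection_minimizer (n : ℕ)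
    (X : Matrix (Fin n) (Fin n) ℂ) (hX : X.IsHermitian)
    (ξ : Fin n → ℝ) (v : Fin n → EuclideanSpace ℂ (Fin n)) (hv : Orthonormal ℂ v)
    (hXeig : X = ∑ i, (ξ i : ℂ) • outer (v i))
    (x₀ : ℝ) (hx₀ : ∑ i, max (ξ i - x₀) 0 = 1) :
    IsDensity (∑ i, (↑(max (ξ i - x₀) 0) : ℂ) • outer (v i)) ∧
    ∀ X'' : Matrix (Fin n) (Fin n) ℂ, X''.PosSemidef → X''.trace = 1 →
      frobNorm (X - ∑ i, (↑(max (ξ i - x₀) 0) : ℂ) • outer (v i)) ≤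
        frobNorm (X - X'') := by
  obtain ⟨b, rfl⟩ := exists_orthonormalBasis_coe_eq hv (by simp)
  simpa [IsDensity, and_assoc] using cp1_projection_minimizer_general b hXeig hx₀
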